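/- arXiv:1206.3832 — 3 statements merged into one kernel-verified Lean document; each statement's English description precedes it below -/
import Mathlib

section
/- Let d ≥ 1, let Λ be a finite subset of ℤ^d, and let ψ : ℤ^d → ℝ satisfy ψ(x) ≥ 0 for every x ∉ Λ. Then ∑_{x∈Λ} ψ⁻(x)·Δψ(x) ≥ (1/2)·∑_{b∈Λ̄*} (∇(ψ⁻)(b))² ≥ 0, where ψ⁻(x) = max(−ψ(x), 0). -/
/-!
Write `u = ψ⁻`. Since `u` vanishes off `Λ`, the sum `∑_{x∈Λ} u(x) Δψ(x)` equals
`∑_{(x,y)∈Λ̄*} u(x) (ψ(y) − ψ(x))`. The bond set `Λ̄*` is invariant under reversal, so averaging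
with the reversed sum gives `(1/2) ∑_{(x,y)∈Λ̄*} (u(x) − u(y)) (ψ(y) − ψ(x))`
(summation by parts, `two_mul_sum_eq`). Each term dominates `(u(x) − u(y))²`, because
`−ψ = u − ψ⁺` and `u ψ⁺ = 0` (`sq_negPart_sub_le`).
-/

/-- The set of nearest neighbors of `x` in `ℤ^d` (the `2d` points at Euclidean
distance `1` from `x`, i.e. `x ± eᵢ`). -/
def nbrs (d : ℕ) (x : Fin d → ℤ) : Finset (Fin d → ℤ) :=
  Finset.image
    (fun p : Fin d × Bool => Function.update x p.1 (x p.1 + if p.2 then 1 else -1))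
    Finset.univ

/-- The discrete Laplacian on `ℤ^d`: `Δf(x) = ∑_{y : |x−y|=1} (f(y) − f(x))`. -/
def lap (d : ℕ) (f : (Fin d → ℤ) → ℝ) (x : Fin d → ℤ) : ℝ :=
  ∑ y ∈ nbrs d x, (f y - f x)

/-- The set `Λ̄*` of directed bonds `b = (x, y)`, `|x−y| = 1`, having at least one
endpoint in `Λ`. -/
def barBonds (d : ℕ) (Λ : Finset (Fin d → ℤ)) :
    Finset ((Fin d → ℤ) × (Fin d → ℤ)) :=
  (Λ.biUnion fun x => (nbrs d x).image fun y => (x, y)) ∪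
    (Λ.biUnion fun y => (nbrs d y).image fun x => (x, y))

/-- The discrete gradient `∇f(b) = f(x) − f(y)` for a directed bond `b = (x, y)`. -/
def grad (d : ℕ) (f : (Fin d → ℤ) → ℝ) (b : (Fin d → ℤ) × (Fin d → ℤ)) : ℝ :=
  f b.1 - f b.2


lemma nbrs_symm {d : ℕ} {x y : Fin d → ℤ} (h : y ∈ nbrs d x) : x ∈ nbrs d y := by
  simp only [nbrs, Finset.mem_image, Finset.mem_univ, true_and] at h ⊢
  obtain ⟨⟨i, s⟩, rfl⟩ := h
  refine ⟨(i, !s), ?_⟩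
  cases s <;> simp

lemma mem_barBonds {d : ℕ} {Λ : Finset (Fin d → ℤ)} {b : (Fin d → ℤ) × (Fin d → ℤ)} :
    b ∈ barBonds d Λ ↔ b.2 ∈ nbrs d b.1 ∧ (b.1 ∈ Λ ∨ b.2 ∈ Λ) := by
  obtain ⟨x, y⟩ := b
  have hs : x ∈ nbrs d y ↔ y ∈ nbrs d x := ⟨nbrs_symm, nbrs_symm⟩
  simp only [barBonds, Finset.mem_union, Finset.mem_biUnion, Finset.mem_image, Prod.mk.injEq]
  constructor
  · rintro (⟨a, ha, c, hc, rfl, rfl⟩ | ⟨a, ha, c, hc, rfl, rfl⟩)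
    · exact ⟨hc, Or.inl ha⟩
    · exact ⟨hs.1 hc, Or.inr ha⟩
  · rintro ⟨h, hx | hy⟩
    · exact Or.inl ⟨x, hx, y, h, rfl, rfl⟩
    · exact Or.inr ⟨y, hy, x, hs.2 h, rfl, rfl⟩

lemma sum_mul_lap_eq {d : ℕ} {Λ : Finset (Fin d → ℤ)} {u : (Fin d → ℤ) → ℝ}
    (ψ : (Fin d → ℤ) → ℝ) (hu : ∀ x ∉ Λ, u x = 0) :
    ∑ x ∈ Λ, u x * lap d ψ x = ∑ b ∈ barBonds d Λ, u b.1 * (ψ b.2 - ψ b.1) := by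
  simp only [lap, Finset.mul_sum]
  rw [Finset.sum_sigma']
  refine Finset.sum_of_injOn (fun p => (p.1, p.2)) ?_ ?_ ?_ ?_
  · rintro ⟨a, b⟩ - ⟨a', b'⟩ - h
    simp only [Prod.mk.injEq] at h
    obtain ⟨rfl, rfl⟩ := h
    rfl
  · rintro ⟨x, y⟩ h
    simp only [Finset.coe_sigma, Set.mem_sigma_iff, Finset.mem_coe] at h
    exact mem_barBonds.2 ⟨h.2, Or.inl h.1⟩
  · rintro ⟨x, y⟩ hb hnot
    -- A bond missed by the double sum starts outside `Λ`, where `u` vanishes.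
    have hx : x ∉ Λ := fun hx =>
      hnot ⟨⟨x, y⟩, by simpa using ⟨hx, (mem_barBonds.1 hb).1⟩, rfl⟩
    simp [hu x hx]
  · intro p _
    rfl

/-- Discrete summation by parts, for `u` vanishing outside `Λ`. -/
lemma two_mul_sum_eq {d : ℕ} {Λ : Finset (Fin d → ℤ)} {u : (Fin d → ℤ) → ℝ}
    (ψ : (Fin d → ℤ) → ℝ) (hu : ∀ x ∉ Λ, u x = 0) :
    2 * ∑ x ∈ Λ, u x * lap d ψ x
      = ∑ b ∈ barBonds d Λ, (u b.1 - u b.2) * (ψ b.2 - ψ b.1) := by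
  have hswap : ∑ b ∈ barBonds d Λ, u b.1 * (ψ b.2 - ψ b.1)
      = ∑ b ∈ barBonds d Λ, u b.2 * (ψ b.1 - ψ b.2) := by
    have hmem : ∀ b ∈ barBonds d Λ, b.swap ∈ barBonds d Λ := fun b hb =>
      mem_barBonds.2 ⟨nbrs_symm (mem_barBonds.1 hb).1, (mem_barBonds.1 hb).2.symm⟩
    exact Finset.sum_nbij' Prod.swap Prod.swap hmem hmem (fun _ _ => rfl) (fun _ _ => rfl)
      (fun _ _ => rfl)
  rw [sum_mul_lap_eq ψ hu, two_mul]
  nth_rewrite 2 [hswap]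
  rw [← Finset.sum_add_distrib]
  exact Finset.sum_congr rfl fun b _ => by ring

lemma sq_negPart_sub_le (s t : ℝ) :
    (max (-s) 0 - max (-t) 0) ^ 2 ≤ (max (-s) 0 - max (-t) 0) * (t - s) := by
  rcases max_cases (-s) 0 with ⟨hs, hs'⟩ | ⟨hs, hs'⟩ <;>
    rcases max_cases (-t) 0 with ⟨ht, ht'⟩ | ⟨ht, ht'⟩ <;> rw [hs, ht] <;> nlinarith

/-- If `ψ ≥ 0` outside the finite set `Λ`, then
`∑_{x∈Λ} ψ⁻(x)·Δψ(x) ≥ (1/2)·∑_{b∈Λ̄*} (∇(ψ⁻)(b))² ≥ 0`,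
where `ψ⁻(x) = max (−ψ(x)) 0`. -/
theorem stmt_5 (d : ℕ) (hd : 1 ≤ d) (Λ : Finset (Fin d → ℤ))
    (ψ : (Fin d → ℤ) → ℝ) (hψ : ∀ x ∉ Λ, 0 ≤ ψ x) :
    (∑ x ∈ Λ, max (-ψ x) 0 * lap d ψ x
        ≥ (1 / 2) * ∑ b ∈ barBonds d Λ, (grad d (fun x => max (-ψ x) 0) b) ^ 2)
      ∧ (1 / 2) * ∑ b ∈ barBonds d Λ, (grad d (fun x => max (-ψ x) 0) b) ^ 2 ≥ 0 := by
  have hu : ∀ x ∉ Λ, max (-ψ x) 0 = 0 := fun x hx => max_eq_right (by linarith [hψ x hx])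
  have hparts := two_mul_sum_eq (u := fun x => max (-ψ x) 0) ψ hu
  have hle : ∑ b ∈ barBonds d Λ, (grad d (fun x => max (-ψ x) 0) b) ^ 2
      ≤ ∑ b ∈ barBonds d Λ, (max (-ψ b.1) 0 - max (-ψ b.2) 0) * (ψ b.2 - ψ b.1) :=
    Finset.sum_le_sum fun b _ => sq_negPart_sub_le (ψ b.1) (ψ b.2)
  refine ⟨?_, by positivity⟩
  linarith
end

section
/- Let d ≥ 1, let Λ be a finite subset of ℤ^d, let f : ℝ → ℝ be nondecreasing, and let g : [0,∞) × ℤ^d → ℝ. Suppose u, ũ : [0,∞) → (ℤ^d → ℝ) are such that for every x ∉ Λ and t ≥ 0, u_t(x) = u_0(x) and ũ_t(x) = ũ_0(x), and for every x ∈ Λ the maps t ↦ u_t(x) and t ↦ ũ_t(x) are differentiable with d/dt u_t(x) = Δu_t(x) − f(u_t(x)) + g_t(x) and d/dt ũ_t(x) = Δũ_t(x) − f(ũ_t(x)) + g_t(x). If u_0(x) ≤ ũ_0(x) for every x ∈ ℤ^d, then u_t(x) ≤ ũ_t(x) for every t ≥ 0 and x ∈ ℤ^d. -/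
lemma left_deriv_nonneg_of_max {φ : ℝ → ℝ} {φ' t : ℝ} (ht : 0 < t)
    (hd : HasDerivWithinAt φ φ' (Set.Ici 0) t)
    (hmax : ∀ s, 0 ≤ s → s < t → φ s ≤ φ t) : 0 ≤ φ' := by
  have hd' : HasDerivWithinAt φ φ' (Set.Iio t) t :=
    (hd.hasDerivAt (Ici_mem_nhds ht)).hasDerivWithinAt
  have hlim := (hasDerivWithinAt_iff_tendsto_slope' (by simp)).1 hd'
  refine ge_of_tendsto hlim ?_
  filter_upwards [self_mem_nhdsWithin, mem_nhdsWithin_of_mem_nhds (Ioi_mem_nhds ht)] with s hs hs0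
  rw [slope_def_field]
  exact div_nonneg_of_nonpos (sub_nonpos.2 (hmax s (le_of_lt hs0) hs)) (sub_nonpos.2 (le_of_lt hs))

lemma lap_sub_nonpos_of_max {d : ℕ} {v v' : (Fin d → ℤ) → ℝ} {x : Fin d → ℤ}
    (h : ∀ y, v y - v' y ≤ v x - v' x) : lap d v x ≤ lap d v' x :=
  Finset.sum_le_sum fun y _ => by linarith [h y]

/-- Pathwise comparison principle in the initial data: if `f` is nondecreasing and
`u, ũ` solve `d/dt v_t(x) = Δv_t(x) − f(v_t(x)) + g_t(x)` on a finite set `Λ` (being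
frozen to their initial values outside `Λ`), and `u_0 ≤ ũ_0`, then `u_t ≤ ũ_t` for all
`t ≥ 0`. -/
theorem stmt_13 (d : ℕ) (hd : 1 ≤ d) (Λ : Finset (Fin d → ℤ))
    (f : ℝ → ℝ) (hf : Monotone f)
    (g : ℝ → (Fin d → ℤ) → ℝ)
    (u utld : ℝ → (Fin d → ℤ) → ℝ)
    (hu_out : ∀ x : Fin d → ℤ, x ∉ Λ → ∀ t : ℝ, 0 ≤ t → u t x = u 0 x)
    (hutld_out : ∀ x : Fin d → ℤ, x ∉ Λ → ∀ t : ℝ, 0 ≤ t → utld t x = utld 0 x)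
    (hu : ∀ x ∈ Λ, ∀ t : ℝ, 0 ≤ t →
      HasDerivWithinAt (fun s => u s x)
        (lap d (u t) x - f (u t x) + g t x) (Set.Ici 0) t)
    (hutld : ∀ x ∈ Λ, ∀ t : ℝ, 0 ≤ t →
      HasDerivWithinAt (fun s => utld s x)
        (lap d (utld t) x - f (utld t x) + g t x) (Set.Ici 0) t)
    (h0 : ∀ x, u 0 x ≤ utld 0 x) :
    ∀ t : ℝ, 0 ≤ t → ∀ x, u t x ≤ utld t x := by
  intro T hT z
  by_contra! hz
  have hout : ∀ x, x ∉ Λ → ∀ t, 0 ≤ t → u t x - utld t x ≤ 0 := fun x hx t ht => by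
    rw [hu_out x hx t ht, hutld_out x hx t ht]
    linarith [h0 x]
  have hzΛ : z ∈ Λ := by
    by_contra h
    linarith [hout z h T hT]
  obtain ⟨ε, hε, hεT⟩ : ∃ ε : ℝ, 0 < ε ∧ ε * T < u T z - utld T z := by
    refine ⟨(u T z - utld T z) / (T + 1), div_pos (by linarith) (by linarith), ?_⟩
    rw [div_mul_eq_mul_div, div_lt_iff₀ (by linarith)]
    nlinarith
  have hder : ∀ x ∈ Λ, ∀ t, 0 ≤ t → HasDerivWithinAt (fun s => u s x - utld s x - ε * s)
      ((lap d (u t) x - f (u t x) + g t x) - (lap d (utld t) x - f (utld t x) + g t x) - ε * 1)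
      (Set.Ici 0) t := fun x hx t ht =>
    ((hu x hx t ht).sub (hutld x hx t ht)).sub ((hasDerivWithinAt_id t _).const_mul ε)
  have hmax : ∀ x ∈ Λ, ∃ t ∈ Set.Icc 0 T, ∀ s ∈ Set.Icc 0 T,
      u s x - utld s x - ε * s ≤ u t x - utld t x - ε * t := fun x hx =>
    isCompact_Icc.exists_isMaxOn ⟨0, le_rfl, hT⟩
      fun t ht => (hder x hx t ht.1).continuousWithinAt.mono fun s hs => hs.1
  choose! τ hτ hτmax using hmax
  obtain ⟨x₀, hx₀, hx₀max⟩ := Λ.exists_max_image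
    (fun x => u (τ x) x - utld (τ x) x - ε * τ x) ⟨z, hzΛ⟩
  set t₀ := τ x₀
  have ht₀ : t₀ ∈ Set.Icc 0 T := hτ x₀ hx₀
  have hall : ∀ x ∈ Λ, ∀ s ∈ Set.Icc 0 T,
      u s x - utld s x - ε * s ≤ u t₀ x₀ - utld t₀ x₀ - ε * t₀ := fun x hx s hs =>
    (hτmax x hx s hs).trans (hx₀max x hx)
  have hpos : 0 < u t₀ x₀ - utld t₀ x₀ - ε * t₀ := by
    linarith [hall z hzΛ T ⟨hT, le_rfl⟩]
  have ht₀pos : 0 < t₀ := by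
    rcases ht₀.1.eq_or_lt with h | h
    · rw [← h] at hpos
      linarith [h0 x₀]
    · exact h
  have hwpos : 0 < u t₀ x₀ - utld t₀ x₀ := by
    linarith [mul_pos hε ht₀pos]
  have hD := left_deriv_nonneg_of_max ht₀pos (hder x₀ hx₀ t₀ ht₀.1)
    fun s hs hst => hall x₀ hx₀ s ⟨hs, hst.le.trans ht₀.2⟩
  have hlap : lap d (u t₀) x₀ ≤ lap d (utld t₀) x₀ := lap_sub_nonpos_of_max fun y => by
    by_cases hy : y ∈ Λ
    · linarith [hall y hy t₀ ht₀]
    · linarith [hout y hy t₀ ht₀.1]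
  have hfm : f (utld t₀ x₀) ≤ f (u t₀ x₀) := hf (by linarith)
  linarith
end

section
/- Let d ≥ 1, let Λ be a finite subset of ℤ^d, let f, f̃ : ℝ → ℝ be nonincreasing functions with f(s) ≤ f̃(s) for every s ∈ ℝ, and let g : [0,∞) × ℤ^d → ℝ. Suppose u, ũ : [0,∞) → (ℤ^d → ℝ) are such that for every x ∉ Λ and t ≥ 0, u_t(x) = u_0(x) and ũ_t(x) = ũ_0(x), and for every x ∈ Λ the maps t ↦ u_t(x) and t ↦ ũ_t(x) are differentiable with d/dt u_t(x) = Δu_t(x) + f(u_t(x)) + g_t(x) and d/dt ũ_t(x) = Δũ_t(x) + f̃(ũ_t(x)) + g_t(x). If u_0(x) ≤ ũ_0(x) for every x ∈ ℤ^d, then u_t(x) ≤ ũ_t(x) for every t ≥ 0 and x ∈ ℤ^d. -/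
/-- At a maximum over `[0, T]` other than the left endpoint, the one-sided derivative is
nonnegative. -/
lemma deriv_nonneg_of_isMaxOn_Icc {φ : ℝ → ℝ} {φ' T τ : ℝ} (hτ : τ ∈ Set.Icc 0 T) (hpos : 0 < τ)
    (hmax : IsMaxOn φ (Set.Icc 0 T) τ) (hφ : HasDerivWithinAt φ φ' (Set.Icc 0 T) τ) :
    0 ≤ φ' := by
  have hcone : (0 : ℝ) - τ ∈ posTangentConeAt (Set.Icc 0 T) τ := by
    apply sub_mem_posTangentConeAt_of_segment_subset
    exact (convex_Icc 0 T).segment_subset hτ ⟨le_rfl, hτ.1.trans hτ.2⟩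
  have h := hmax.localize.hasFDerivWithinAt_nonpos hφ.hasFDerivWithinAt hcone
  simp at h
  nlinarith

/-- If `a - b` is maximal at `x`, then `Δ(a - b)(x) ≤ 0`. -/
lemma lap_le_lap {d : ℕ} {a b : (Fin d → ℤ) → ℝ} {x : Fin d → ℤ}
    (h : ∀ y, a y - b y ≤ a x - b x) : lap d a x ≤ lap d b x :=
  Finset.sum_le_sum fun y _ => by linarith [h y]

/-- Pathwise comparison principle in the reflection drift: if `f, f̃` are nonincreasing
with `f ≤ f̃` pointwise, `u` solves `d/dt u_t(x) = Δu_t(x) + f(u_t(x)) + g_t(x)` and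
`ũ` solves the same equation with `f̃` in place of `f` on a finite set `Λ` (both frozen
to their initial values outside `Λ`), and `u_0 ≤ ũ_0`, then `u_t ≤ ũ_t` for all
`t ≥ 0`. -/
theorem stmt_14 (d : ℕ) (hd : 1 ≤ d) (Λ : Finset (Fin d → ℤ))
    (f ftld : ℝ → ℝ) (hf : Antitone f) (hftld : Antitone ftld)
    (hle : ∀ s : ℝ, f s ≤ ftld s)
    (g : ℝ → (Fin d → ℤ) → ℝ)
    (u utld : ℝ → (Fin d → ℤ) → ℝ)
    (hu_out : ∀ x : Fin d → ℤ, x ∉ Λ → ∀ t : ℝ, 0 ≤ t → u t x = u 0 x)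
    (hutld_out : ∀ x : Fin d → ℤ, x ∉ Λ → ∀ t : ℝ, 0 ≤ t → utld t x = utld 0 x)
    (hu : ∀ x ∈ Λ, ∀ t : ℝ, 0 ≤ t →
      HasDerivWithinAt (fun s => u s x)
        (lap d (u t) x + f (u t x) + g t x) (Set.Ici 0) t)
    (hutld : ∀ x ∈ Λ, ∀ t : ℝ, 0 ≤ t →
      HasDerivWithinAt (fun s => utld s x)
        (lap d (utld t) x + ftld (utld t x) + g t x) (Set.Ici 0) t)
    (h0 : ∀ x, u 0 x ≤ utld 0 x) :
    ∀ t : ℝ, 0 ≤ t → ∀ x, u t x ≤ utld t x := by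
  intro T hT x₀
  by_contra! hlt
  have hout : ∀ x ∉ Λ, ∀ t : ℝ, 0 ≤ t → u t x - utld t x ≤ 0 := fun x hx t ht => by
    rw [hu_out x hx t ht, hutld_out x hx t ht]
    linarith [h0 x]
  have hx₀ : x₀ ∈ Λ := by
    by_contra hx
    linarith [hout x₀ hx T hT]
  obtain ⟨ε, hε, hεT⟩ : ∃ ε : ℝ, 0 < ε ∧ ε * T < u T x₀ - utld T x₀ := by
    refine ⟨(u T x₀ - utld T x₀) / (T + 1), by apply div_pos <;> linarith, ?_⟩
    rw [div_mul_eq_mul_div, div_lt_iff₀ (by linarith)]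
    nlinarith
  have hderiv : ∀ x ∈ Λ, ∀ t ∈ Set.Icc 0 T,
      HasDerivWithinAt (fun s => u s x - utld s x - ε * s)
        ((lap d (u t) x + f (u t x) + g t x)
          - (lap d (utld t) x + ftld (utld t x) + g t x) - ε * 1) (Set.Icc 0 T) t :=
    fun x hx t ht =>
      (((hu x hx t ht.1).sub (hutld x hx t ht.1)).sub
        ((hasDerivWithinAt_id t _).const_mul ε)).mono Set.Icc_subset_Ici_self
  have hmaxt : ∀ x : Fin d → ℤ, ∃ τ : ℝ, x ∈ Λ → τ ∈ Set.Icc 0 T ∧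
      IsMaxOn (fun s => u s x - utld s x - ε * s) (Set.Icc 0 T) τ := fun x => by
    by_cases hx : x ∈ Λ
    · obtain ⟨τ, h1, h2⟩ := isCompact_Icc.exists_isMaxOn ⟨0, le_rfl, hT⟩
        (fun t ht => (hderiv x hx t ht).continuousWithinAt)
      exact ⟨τ, fun _ => ⟨h1, h2⟩⟩
    · exact ⟨0, fun h => absurd h hx⟩
  choose τ hτ using hmaxt
  obtain ⟨x, hx, hxmax⟩ := Λ.exists_max_image
    (fun x => u (τ x) x - utld (τ x) x - ε * τ x) ⟨x₀, hx₀⟩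
  obtain ⟨hτx, hτmax⟩ := hτ x hx
  have hmax : ∀ y ∈ Λ, ∀ t ∈ Set.Icc 0 T,
      u t y - utld t y - ε * t ≤ u (τ x) x - utld (τ x) x - ε * τ x :=
    fun y hy t ht => ((hτ y hy).2 ht).trans (hxmax y hy)
  have hval : 0 < u (τ x) x - utld (τ x) x - ε * τ x := by
    linarith [hmax x₀ hx₀ T ⟨hT, le_rfl⟩]
  have hτpos : 0 < τ x := by
    refine hτx.1.lt_of_ne fun h => ?_
    rw [← h] at hval
    linarith [h0 x]
  have hετ : 0 < ε * τ x := mul_pos hε hτpos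
  have hlap : lap d (u (τ x)) x ≤ lap d (utld (τ x)) x := by
    refine lap_le_lap fun y => ?_
    by_cases hy : y ∈ Λ
    · linarith [hmax y hy (τ x) hτx]
    · linarith [hout y hy (τ x) hτx.1]
  have hdrift : f (u (τ x) x) ≤ ftld (utld (τ x) x) :=
    (hle _).trans (hftld (by linarith))
  have := deriv_nonneg_of_isMaxOn_Icc hτx hτpos hτmax (hderiv x hx _ hτx)
  linarith
end
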